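/- Let B ≥ 1 and λ ∈ ℝ with 0 < λ ≤ 1, and let Λ be the (B+1)×(B+1) matrix defined in the context. Then consecutive powers of Λ become arbitrarily close: for all indices j, l ∈ {0,…,B}, the sequence (Λ^{m+1})_{j,l} − (Λ^m)_{j,l} converges to 0 as m → ∞. -/

import Mathlib

open Matrix Filter

/-- The `(B+1) × (B+1)` transition matrix `Λ`: diagonal entries `1 - λ` (except the
last one, which is `1`), subdiagonal entries `λ`, all other entries `0`. -/
def Lam (B : ℕ) (lam : ℝ) : Matrix (Fin (B+1)) (Fin (B+1)) ℝ :=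
  Matrix.of fun j l =>
    if (j : ℕ) = (l : ℕ) then (if (j : ℕ) < B then 1 - lam else 1)
    else if (j : ℕ) = (l : ℕ) + 1 then lam
    else 0

/-!
The characteristic polynomial of `Λ` is `(X - (1 - λ)) ^ B * (X - 1)`, so by Cayley–Hamilton the
range of `Λ - 1` lies in the generalized eigenspace of `Λ` for `1 - λ`. If `0 < λ < 2` then
`|1 - λ| < 1`, so the powers of `Λ` tend to zero on that space, and
`Λ ^ (m + 1) - Λ ^ m = Λ ^ m * (Λ - 1)`.
-/

open Polynomial Topology

theorem tendsto_zero_of_le_mul_add {r : ℝ} (hr₀ : 0 ≤ r) (hr₁ : r < 1) {u b : ℕ → ℝ}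
    (hu : ∀ m, 0 ≤ u m) (hub : ∀ m, u (m + 1) ≤ r * u m + b m) (hb : Tendsto b atTop (𝓝 0)) :
    Tendsto u atTop (𝓝 0) := by
  refine tendsto_order.2 ⟨fun c hc => .of_forall fun m => hc.trans_le (hu m), fun ε hε => ?_⟩
  have b_small : ∀ᶠ m in atTop, b m < (1 - r) * (ε / 2) :=
    hb.eventually_lt_const (mul_pos (sub_pos.2 hr₁) (half_pos hε))
  obtain ⟨N, hN⟩ := eventually_atTop.1 b_small
  -- `ε / 2` is the fixed point of `t ↦ r * t + (1 - r) * (ε / 2)`, so the excess over it contracts.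
  have excess_le (k : ℕ) : u (N + k) - ε / 2 ≤ r ^ k * (u N - ε / 2) := by
    refine le_geom (u := fun k => u (N + k) - ε / 2) hr₀ k fun i _ => ?_
    rw [← add_assoc]
    linarith [hub (N + i), hN (N + i) (Nat.le_add_right N i)]
  have bound_tendsto : Tendsto (fun k => r ^ k * (u N - ε / 2)) atTop (𝓝 0) := by
    simpa only [zero_mul] using (tendsto_pow_atTop_nhds_zero_of_lt_one hr₀ hr₁).mul_const _
  rw [← map_add_atTop_eq_nat N, eventually_map]
  filter_upwards [bound_tendsto.eventually_lt_const (half_pos hε)] with k hk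
  rw [add_comm k N]
  linarith [excess_le k]

theorem tendsto_pow_apply_of_mem_genEigenspace {𝕜 E : Type*} [NormedField 𝕜]
    [SeminormedAddCommGroup E] [NormedSpace 𝕜 E] {T : Module.End 𝕜 E} {μ : 𝕜} (hμ : ‖μ‖ < 1)
    {n : ℕ} {v : E} (hv : v ∈ T.genEigenspace μ n) :
    Tendsto (fun m => (T ^ m) v) atTop (𝓝 0) := by
  induction n generalizing v with
  | zero =>
    obtain rfl : v = 0 := by simpa using hv
    simpa only [map_zero] using tendsto_const_nhds
  | succ n ih =>
    set w := (T - μ • 1) v with w_def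
    have hw : w ∈ T.genEigenspace μ n := by
      rw [Module.End.mem_genEigenspace_nat, LinearMap.mem_ker] at hv ⊢
      rwa [pow_succ] at hv
    have hTv : T v = μ • v + w := by simp [w_def]
    refine tendsto_zero_iff_norm_tendsto_zero.2 <| tendsto_zero_of_le_mul_add (norm_nonneg μ) hμ
      (fun m => norm_nonneg _) (fun m => ?_) (tendsto_zero_iff_norm_tendsto_zero.1 (ih hw))
    calc ‖(T ^ (m + 1)) v‖ = ‖μ • (T ^ m) v + (T ^ m) w‖ := by
          rw [pow_succ, Module.End.mul_apply, hTv, map_add, map_smul]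
      _ ≤ ‖μ‖ * ‖(T ^ m) v‖ + ‖(T ^ m) w‖ := (norm_add_le _ _).trans_eq (by rw [norm_smul])

theorem tendsto_pow_mul_of_pow_sub_smul_one_mul_eq_zero {𝕜 ι κ : Type*} [NormedField 𝕜]
    [Fintype ι] [DecidableEq ι] {A : Matrix ι ι 𝕜} {D : Matrix ι κ 𝕜} {μ : 𝕜} (hμ : ‖μ‖ < 1)
    {n : ℕ} (hD : (A - μ • 1) ^ n * D = 0) :
    Tendsto (fun m => A ^ m * D) atTop (𝓝 0) := by
  have col_mem_genEigenspace (l : κ) :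
      D.col l ∈ Module.End.genEigenspace (Matrix.toLin' A) μ n := by
    rw [Module.End.mem_genEigenspace_nat, LinearMap.mem_ker, Module.End.one_eq_id,
      ← Matrix.toLin'_one, ← map_smul, ← map_sub, ← Matrix.toLin'_pow, Matrix.toLin'_apply]
    exact congrArg (fun M => M.col l) hD
  refine tendsto_pi_nhds.2 fun j => tendsto_pi_nhds.2 fun l => ?_
  have column_tendsto := tendsto_pow_apply_of_mem_genEigenspace hμ (col_mem_genEigenspace l)
  simp only [← Matrix.toLin'_pow, Matrix.toLin'_apply] at column_tendsto
  exact tendsto_pi_nhds.1 column_tendsto j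

theorem tendsto_pow_succ_sub_pow_of_charpoly_eq {𝕜 ι : Type*} [NormedField 𝕜] [Fintype ι]
    [DecidableEq ι] {A : Matrix ι ι 𝕜} {μ : 𝕜} (hμ : ‖μ‖ < 1) {n : ℕ}
    (hA : A.charpoly = (X - C μ) ^ n * (X - 1)) :
    Tendsto (fun m => A ^ (m + 1) - A ^ m) atTop (𝓝 0) := by
  have annihilate : (A - μ • 1) ^ n * (A - 1) = 0 := by
    simpa [hA, Algebra.algebraMap_eq_smul_one] using A.aeval_self_charpoly
  refine (tendsto_pow_mul_of_pow_sub_smul_one_mul_eq_zero hμ annihilate).congr fun m => ?_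
  rw [mul_sub, mul_one, ← pow_succ]

theorem Lam_zero (B : ℕ) : Lam B 0 = 1 := by
  ext j l
  simp [Lam, Matrix.one_apply, Fin.ext_iff]

theorem Lam_isLowerTriangular (B : ℕ) (lam : ℝ) : (Lam B lam).IsLowerTriangular := by
  intro j l (hjl : (j : ℕ) < l)
  simp only [Lam, Matrix.of_apply]
  rw [if_neg (by lia), if_neg (by lia)]

theorem Lam_charpoly (B : ℕ) (lam : ℝ) :
    (Lam B lam).charpoly = (X - C (1 - lam)) ^ B * (X - 1) := by
  have upper : (Lam B lam)ᵀ.IsUpperTriangular := (Lam_isLowerTriangular B lam).transpose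
  rw [← Matrix.charpoly_transpose, Matrix.charpoly_of_isUpperTriangular _ upper,
    Fin.prod_univ_castSucc]
  simp [Lam]

theorem Lam_pow_succ_sub_tendsto_zero_general (B : ℕ) {lam : ℝ} (h0 : 0 ≤ lam) (h2 : lam < 2) :
    Tendsto (fun m => Lam B lam ^ (m + 1) - Lam B lam ^ m) atTop (𝓝 0) := by
  obtain rfl | hpos := h0.eq_or_lt
  · simp [Lam_zero]
  · have norm_lt_one : ‖1 - lam‖ < 1 := by
      rw [Real.norm_eq_abs, abs_lt]
      constructor <;> linarith
    exact tendsto_pow_succ_sub_pow_of_charpoly_eq norm_lt_one (Lam_charpoly B lam)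

/-- For 0 < λ ≤ 1, consecutive powers of Λ become arbitrarily close entrywise. -/
theorem Lam_pow_succ_sub_tendsto_zero (B : ℕ) (hB : 1 ≤ B) (lam : ℝ)
    (h0 : 0 < lam) (h1 : lam ≤ 1) (j l : Fin (B+1)) :
    Filter.Tendsto (fun m : ℕ => (Lam B lam ^ (m + 1)) j l - (Lam B lam ^ m) j l)
      Filter.atTop (nhds 0) :=
  tendsto_pi_nhds.1 (tendsto_pi_nhds.1
    (Lam_pow_succ_sub_tendsto_zero_general B h0.le (h1.trans_lt one_lt_two)) j) l
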